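/- arXiv:2105.15044 — 2 statements merged into one kernel-verified Lean document; each statement's English description precedes it below -/
import Mathlib

section
/- Assume m ≥ 2 and let Û₁ : H → H × H be the bounded linear map Û₁ b = (λ₁ b, η₁ b). Then for every n ∈ {1, …, m−1}, the operator norm of U_n ∘ ⋯ ∘ U_2 ∘ Û₁ equals √( sup_{p ∈ ℕ} β̃_{1,n,p}² + η_{1,n}² ); moreover, with Ū_m : H × H → H defined by Ū_m(x, b) = W_m x + λ_m b, the operator norm of Ū_m ∘ U_{m−1} ∘ ⋯ ∘ U_2 ∘ Û₁ equals √( sup_{p ∈ ℕ} β̃_{1,m,p}² ). -/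
/-!
Write `T = U_n ∘ ⋯ ∘ U_2 ∘ Û₁`. By induction on `n`, `T b = (D b, η_{1,n} b)`, where `D` is a bounded
operator that is diagonal in the basis `v` with eigenvalues `β̃_{1,n,p}`: this is the recursion
`β̃_{1,n+1,p} = β_p^{(n+1)} β̃_{1,n,p} + λ_{n+1} η_{1,n}` (`betaT_one_succ`, `exists_diag`).
Hence `‖T b‖² = ‖D b‖² + η_{1,n}² ‖b‖²`, which by Parseval is
`∑ p, (β̃_{1,n,p}² + η_{1,n}²) ⟪b, v p⟫²`. The supremum of this quadratic form over the unit sphere is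
the supremum of its coefficients, approached along the basis vectors (`norm_eq_sqrt_iSup`).
The map ending in `Ū_m` keeps only the first component, so the same lemma applies with constant `0`.
-/


noncomputable section

open Finset

variable {H : Type*} [NormedAddCommGroup H] [InnerProductSpace ℝ H]

/-- Build the pair `(x, b)` in the `ℓ²` product space `H × H`. -/
def mkP (x b : H) : WithLp 2 (H × H) := (WithLp.equiv 2 (H × H)).symm (x, b)

/-- First component of an element of the product space. -/
def fstP (z : WithLp 2 (H × H)) : H := (WithLp.equiv 2 (H × H) z).1

/-- Second component of an element of the product space. -/
def sndP (z : WithLp 2 (H × H)) : H := (WithLp.equiv 2 (H × H) z).2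

/-- `(x, b) ↦ x` as a continuous linear map on the `ℓ²` product. -/
def fstL : WithLp 2 (H × H) →L[ℝ] H :=
  (ContinuousLinearMap.fst ℝ H H).comp
    (WithLp.prodContinuousLinearEquiv 2 ℝ H H).toContinuousLinearMap

/-- `(x, b) ↦ b` as a continuous linear map on the `ℓ²` product. -/
def sndL : WithLp 2 (H × H) →L[ℝ] H :=
  (ContinuousLinearMap.snd ℝ H H).comp
    (WithLp.prodContinuousLinearEquiv 2 ℝ H H).toContinuousLinearMap

/-- `Uₙ(x, b) = (Wₙ x + λₙ b, ηₙ b)` as a continuous linear map on the product space. -/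
def Uop (W : ℕ → H →L[ℝ] H) (lam eta : ℕ → ℝ) (n : ℕ) :
    WithLp 2 (H × H) →L[ℝ] WithLp 2 (H × H) :=
  ((WithLp.prodContinuousLinearEquiv 2 ℝ H H).symm.toContinuousLinearMap).comp
    (((((W n).comp (ContinuousLinearMap.fst ℝ H H)) + lam n • (ContinuousLinearMap.snd ℝ H H)).prod
        (eta n • (ContinuousLinearMap.snd ℝ H H))).comp
      (WithLp.prodContinuousLinearEquiv 2 ℝ H H).toContinuousLinearMap)

/-- Composition `Aₙ ∘ ⋯ ∘ Aᵢ` (the identity when `n < i`, i.e. when the composition is empty). -/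
def opComp {E : Type*} [NormedAddCommGroup E] [NormedSpace ℝ E]
    (A : ℕ → E →L[ℝ] E) (i : ℕ) : ℕ → (E →L[ℝ] E)
  | 0 => 1
  | n + 1 => if n + 1 < i then 1 else (A (n + 1)).comp (opComp A i n)

/-- `η_{i,j} = η_j ⋯ η_i` if `j ≥ i`, and `1` otherwise. -/
def etaP (eta : ℕ → ℝ) (i j : ℕ) : ℝ := ∏ k ∈ Finset.Icc i j, eta k

/-- `β_{i,n,p} = ∏_{j=i}^n β_p^{(j)}`. -/
def betaC (beta : ℕ → ℕ → ℝ) (i n p : ℕ) : ℝ := ∏ j ∈ Finset.Icc i n, beta j p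

/-- `β̃_{i,n,p} = Σ_{j=i}^{n−1} (∏_{l=j+1}^n β_p^{(l)}) λ_j η_{i,j−1} + λ_n η_{i,n−1}`. -/
def betaT (beta : ℕ → ℕ → ℝ) (lam eta : ℕ → ℝ) (i n p : ℕ) : ℝ :=
  (∑ j ∈ Finset.Icc i (n - 1), (∏ l ∈ Finset.Icc (j + 1) n, beta l p) * lam j * etaP eta i (j - 1))
    + lam n * etaP eta i (n - 1)

/-- The operator `W̃_{i,n} = Σ_{j=i}^{n−1} λ_j η_{i,j−1} (Wₙ ∘ ⋯ ∘ W_{j+1}) + λ_n η_{i,n−1} Id`. -/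
def Wt (W : ℕ → H →L[ℝ] H) (lam eta : ℕ → ℝ) (i n : ℕ) : H →L[ℝ] H :=
  (∑ j ∈ Finset.Icc i (n - 1), (lam j * etaP eta i (j - 1)) • opComp W (j + 1) n)
    + (lam n * etaP eta i (n - 1)) • (1 : H →L[ℝ] H)

/-- `a_{i,n}`. -/
def aC (beta : ℕ → ℕ → ℝ) (lam eta : ℕ → ℝ) (i n : ℕ) : ℝ :=
  (1 / 2) * ⨆ p : ℕ,
    (betaC beta i n p ^ 2 + betaT beta lam eta i n p ^ 2 + etaP eta i n ^ 2
      + Real.sqrt ((betaC beta i n p ^ 2 + betaT beta lam eta i n p ^ 2 + etaP eta i n ^ 2) ^ 2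
          - 4 * betaC beta i n p ^ 2 * etaP eta i n ^ 2))

/-- `ā_{i,n} = sup_p (β_{i,n,p}² + β̃_{i,n,p}²)`. -/
def aBar (beta : ℕ → ℕ → ℝ) (lam eta : ℕ → ℝ) (i n : ℕ) : ℝ :=
  ⨆ p : ℕ, (betaC beta i n p ^ 2 + betaT beta lam eta i n p ^ 2)

/-- `Qₙ(x, b) = (Rₙ x, b)`. -/
def Qop (R : ℕ → H → H) (n : ℕ) (z : WithLp 2 (H × H)) : WithLp 2 (H × H) :=
  mkP (R n (fstP z)) (sndP z)

/-- The virtual network `Qₙ ∘ Uₙ ∘ ⋯ ∘ Q₁ ∘ U₁`. -/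
def net (U : ℕ → WithLp 2 (H × H) →L[ℝ] WithLp 2 (H × H))
    (Q : ℕ → WithLp 2 (H × H) → WithLp 2 (H × H)) :
    ℕ → (WithLp 2 (H × H) → WithLp 2 (H × H))
  | 0 => id
  | n + 1 => fun z => Q (n + 1) (U (n + 1) (net U Q n z))

/-- `Ū_m (x, b) = W_m x + λ_m b` as a continuous linear map to `H`. -/
def Ubar (W : ℕ → H →L[ℝ] H) (lam : ℕ → ℝ) (m : ℕ) : WithLp 2 (H × H) →L[ℝ] H :=
  ((W m).comp fstL) + lam m • sndL

/-- `Û₁ b = (λ₁ b, η₁ b)`. -/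
def Uhat1a (lam eta : ℕ → ℝ) : H →L[ℝ] WithLp 2 (H × H) :=
  ((WithLp.prodContinuousLinearEquiv 2 ℝ H H).symm.toContinuousLinearMap).comp
    ((lam 1 • (1 : H →L[ℝ] H)).prod (eta 1 • (1 : H →L[ℝ] H)))

/-- `Û₁ b = (W₁ b + λ₁ b, η₁ b)`. -/
def Uhat1b (W : ℕ → H →L[ℝ] H) (lam eta : ℕ → ℝ) : H →L[ℝ] WithLp 2 (H × H) :=
  ((WithLp.prodContinuousLinearEquiv 2 ℝ H H).symm.toContinuousLinearMap).comp
    ((W 1 + lam 1 • (1 : H →L[ℝ] H)).prod (eta 1 • (1 : H →L[ℝ] H)))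

/-- The chain `Qₙ ∘ Uₙ ∘ ⋯ ∘ Q₂ ∘ U₂ ∘ Q₁ ∘ Û₁` (for `n ≥ 1`), fed with an input in `H`. -/
def midNet (U : ℕ → WithLp 2 (H × H) →L[ℝ] WithLp 2 (H × H))
    (Q : ℕ → WithLp 2 (H × H) → WithLp 2 (H × H)) (U1 : H → WithLp 2 (H × H)) :
    ℕ → (H → WithLp 2 (H × H))
  | 0 => U1
  | 1 => fun b => Q 1 (U1 b)
  | n + 2 => fun b => Q (n + 2) (U (n + 2) (midNet U Q U1 (n + 1) b))

lemma etaP_one_succ (eta : ℕ → ℝ) (n : ℕ) :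
    etaP eta 1 (n + 1) = etaP eta 1 n * eta (n + 1) := by
  unfold etaP
  exact Finset.prod_Icc_succ_top (by omega) _

lemma betaT_one_succ (beta : ℕ → ℕ → ℝ) (lam eta : ℕ → ℝ) (n p : ℕ) (hn : 1 ≤ n) :
    betaT beta lam eta 1 (n + 1) p
      = beta (n + 1) p * betaT beta lam eta 1 n p + lam (n + 1) * etaP eta 1 n := by
  obtain ⟨k, rfl⟩ : ∃ k, n = k + 1 := ⟨n - 1, by omega⟩
  unfold betaT
  simp only [Nat.add_sub_cancel]
  rw [Finset.sum_Icc_succ_top (by omega), mul_add, Finset.mul_sum]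
  have h : ∀ j ∈ Finset.Icc 1 k,
      (∏ l ∈ Finset.Icc (j + 1) (k + 1 + 1), beta l p) * lam j * etaP eta 1 (j - 1)
        = beta (k + 1 + 1) p *
          ((∏ l ∈ Finset.Icc (j + 1) (k + 1), beta l p) * lam j * etaP eta 1 (j - 1)) := by
    intro j hj
    rw [Finset.mem_Icc] at hj
    rw [Finset.prod_Icc_succ_top (by omega)]
    ring
  rw [Finset.sum_congr rfl h]
  simp
  ring

lemma inner_diag (v : HilbertBasis ℕ ℝ H) (D : H →L[ℝ] H) (d : ℕ → ℝ)
    (hD : ∀ p, D (v p) = d p • v p) (b : H) (p : ℕ) :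
    inner ℝ (D b) (v p) = d p * inner ℝ b (v p) := by
  have h1 := (innerSL ℝ (v p)).hasSum (D.hasSum (v.hasSum_repr b))
  have h2 : HasSum (fun q => innerSL ℝ (v p) (D (v.repr b q • v q)))
      (innerSL ℝ (v p) (D (v.repr b p • v p))) := by
    refine hasSum_single p fun q hq => ?_
    simp [hD, v.orthonormal.2 hq.symm]
  have h := h1.unique h2
  simp only [map_smul, hD, innerSL_apply_apply, smul_eq_mul, v.repr_apply_apply,
    real_inner_self_eq_norm_sq, v.orthonormal.1] at h
  rw [real_inner_comm, h, real_inner_comm]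
  ring

lemma hasSum_inner_sq (v : HilbertBasis ℕ ℝ H) (x : H) :
    HasSum (fun p => inner ℝ x (v p) ^ 2) (‖x‖ ^ 2) := by
  have h := v.hasSum_inner_mul_inner x x
  rw [real_inner_self_eq_norm_sq] at h
  refine h.congr_fun fun p => ?_
  rw [real_inner_comm x (v p)]
  ring

/-- A bounded operator `T` with `‖T b‖² = ‖D b‖² + c² ‖b‖²`, where `D` is diagonal in `v` with
eigenvalues `d p`, has norm `√(sup_p (d p² + c²))`. -/
lemma norm_eq_sqrt_iSup {F : Type*} [NormedAddCommGroup F] [NormedSpace ℝ F]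
    (v : HilbertBasis ℕ ℝ H) (D : H →L[ℝ] H) (d : ℕ → ℝ) (c : ℝ)
    (hD : ∀ p, D (v p) = d p • v p) (T : H →L[ℝ] F)
    (hT : ∀ b, ‖T b‖ ^ 2 = ‖D b‖ ^ 2 + c ^ 2 * ‖b‖ ^ 2) :
    ‖T‖ = Real.sqrt (⨆ p : ℕ, (d p ^ 2 + c ^ 2)) := by
  have hv : ∀ p, ‖v p‖ = 1 := v.orthonormal.1
  have hTv : ∀ p, ‖T (v p)‖ ^ 2 = d p ^ 2 + c ^ 2 := by
    intro p
    rw [hT, hD, norm_smul, hv]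
    simp
  have hle : ∀ p, d p ^ 2 + c ^ 2 ≤ ‖T‖ ^ 2 := by
    intro p
    rw [← hTv]
    have := T.le_opNorm (v p)
    rw [hv, mul_one] at this
    gcongr
  have hbdd : BddAbove (Set.range fun p => d p ^ 2 + c ^ 2) :=
    ⟨‖T‖ ^ 2, by rintro _ ⟨p, rfl⟩; exact hle p⟩
  apply le_antisymm
  · refine T.opNorm_le_bound (Real.sqrt_nonneg _) fun b => ?_
    have hS : 0 ≤ ⨆ p : ℕ, (d p ^ 2 + c ^ 2) := Real.iSup_nonneg fun p => by positivity
    have hsum : HasSum (fun p => (d p ^ 2 + c ^ 2) * inner ℝ b (v p) ^ 2) (‖T b‖ ^ 2) := by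
      rw [hT]
      convert (hasSum_inner_sq v (D b)).add ((hasSum_inner_sq v b).mul_left (c ^ 2)) using 2 with p
      rw [inner_diag v D d hD]
      ring
    have hbound := hasSum_le
      (fun p => mul_le_mul_of_nonneg_right (le_ciSup hbdd p) (sq_nonneg (inner ℝ b (v p))))
      hsum ((hasSum_inner_sq v b).mul_left _)
    refine le_of_sq_le_sq ?_ (by positivity)
    rwa [mul_pow, Real.sq_sqrt hS]
  · rw [Real.sqrt_le_left (norm_nonneg _)]
    exact ciSup_le hle

lemma Uop_toLp (W : ℕ → H →L[ℝ] H) (lam eta : ℕ → ℝ) (n : ℕ) (x b : H) :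
    Uop W lam eta n (WithLp.toLp 2 (x, b))
      = WithLp.toLp 2 (W n x + lam n • b, eta n • b) := rfl

lemma Ubar_toLp (W : ℕ → H →L[ℝ] H) (lam : ℕ → ℝ) (n : ℕ) (x b : H) :
    Ubar W lam n (WithLp.toLp 2 (x, b)) = W n x + lam n • b := rfl

/-- The composition `U_n ∘ ⋯ ∘ U_2 ∘ Û₁` has the form `b ↦ (D b, η_{1,n} b)` with `D` diagonal in
`v` with eigenvalues `β̃_{1,n,p}`. -/
lemma exists_diag (m : ℕ) (v : HilbertBasis ℕ ℝ H)
    (W : ℕ → H →L[ℝ] H) (beta : ℕ → ℕ → ℝ) (lam eta : ℕ → ℝ)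
    (hW : ∀ n, 1 ≤ n → n ≤ m → ∀ p : ℕ, W n (v p) = beta n p • v p)
    (n : ℕ) (hn : 1 ≤ n) (hnm : n ≤ m) :
    ∃ D : H →L[ℝ] H, (∀ p, D (v p) = betaT beta lam eta 1 n p • v p) ∧
      ∀ b, (opComp (Uop W lam eta) 2 n).comp (Uhat1a lam eta) b
        = WithLp.toLp 2 (D b, etaP eta 1 n • b) := by
  induction n, hn using Nat.le_induction with
  | base =>
    refine ⟨lam 1 • 1, fun p => ?_, fun b => ?_⟩
    · simp [betaT, etaP]
    · simp [opComp, etaP]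
      rfl
  | succ n hn ih =>
    obtain ⟨D, hD, hT⟩ := ih (by omega)
    refine ⟨(W (n + 1)).comp D + (lam (n + 1) * etaP eta 1 n) • 1, fun p => ?_, fun b => ?_⟩
    · simp only [add_apply, ContinuousLinearMap.comp_apply, hD, map_smul,
        hW (n + 1) (by omega) hnm, betaT_one_succ _ _ _ _ _ hn, smul_apply,
        one_apply_eq_self]
      module
    · have h : opComp (Uop W lam eta) 2 (n + 1)
          = (Uop W lam eta (n + 1)).comp (opComp (Uop W lam eta) 2 n) := by
        rw [opComp, if_neg (by omega)]
      rw [h, ContinuousLinearMap.comp_assoc, ContinuousLinearMap.comp_apply, hT, Uop_toLp,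
        etaP_one_succ, smul_smul, smul_smul, mul_comm (eta (n + 1))]
      rfl

theorem statement13 (m : ℕ) (hm : 1 ≤ m) [CompleteSpace H]
    (v : HilbertBasis ℕ ℝ H)
    (W : ℕ → H →L[ℝ] H) (beta : ℕ → ℕ → ℝ) (lam eta : ℕ → ℝ)
    (hW : ∀ n, 1 ≤ n → n ≤ m → ∀ p : ℕ, W n (v p) = beta n p • v p)
    (hlam : ∀ n, 1 ≤ n → n ≤ m → 0 < lam n)
    (heta : ∀ n, 1 ≤ n → n ≤ m → 0 < eta n)
    (hm2 : 2 ≤ m) :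
    (∀ n, 1 ≤ n → n ≤ m - 1 →
      ‖(opComp (Uop W lam eta) 2 n).comp (Uhat1a lam eta)‖
        = Real.sqrt (⨆ p : ℕ, (betaT beta lam eta 1 n p ^ 2 + etaP eta 1 n ^ 2)))
    ∧ ‖(Ubar W lam m).comp ((opComp (Uop W lam eta) 2 (m - 1)).comp (Uhat1a lam eta))‖
        = Real.sqrt (⨆ p : ℕ, betaT beta lam eta 1 m p ^ 2) := by
  constructor
  · intro n hn hnm
    obtain ⟨D, hD, hT⟩ := exists_diag m v W beta lam eta hW n hn (by omega)
    refine norm_eq_sqrt_iSup v D _ (etaP eta 1 n) hD _ fun b => ?_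
    rw [hT, WithLp.prod_norm_sq_eq_of_L2]
    change ‖D b‖ ^ 2 + ‖etaP eta 1 n • b‖ ^ 2 = _
    rw [norm_smul, mul_pow, Real.norm_eq_abs, sq_abs]
  · obtain ⟨k, rfl⟩ : ∃ k, m = k + 1 := ⟨m - 1, by omega⟩
    obtain ⟨D, hD, hT⟩ := exists_diag (k + 1) v W beta lam eta hW k (by omega) (by omega)
    have key := norm_eq_sqrt_iSup v
      ((W (k + 1)).comp D + (lam (k + 1) * etaP eta 1 k) • 1)
      (fun p => betaT beta lam eta 1 (k + 1) p) 0 (fun p => ?_)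
      ((Ubar W lam (k + 1)).comp
        ((opComp (Uop W lam eta) 2 k).comp (Uhat1a lam eta))) (fun b => ?_)
    · simpa using key
    · simp only [add_apply, ContinuousLinearMap.comp_apply, hD, map_smul,
        hW (k + 1) (by omega) le_rfl, betaT_one_succ _ _ _ _ _ (show 1 ≤ k by omega),
        smul_apply, one_apply_eq_self]
      module
    · rw [ContinuousLinearMap.comp_apply, hT, Ubar_toLp, smul_smul]
      simp
end
end

section
/- Assume m ≥ 2. Let Û₁ : H → H × H be Û₁ b = (λ₁ b, η₁ b), and set â_{1,n} = sup_{p ∈ ℕ} β̃_{1,n,p}² + η_{1,n}² for n ∈ {1, …, m−1} and â_{1,m} = sup_{p ∈ ℕ} β̃_{1,m,p}². Define ā_{i,m} = sup_{p ∈ ℕ} ( β_{i,m,p}² + β̃_{i,m,p}² ), and define recursively θ̂_n = √(â_{1,n}) + Σ_{i=2}^n θ̂_{i−1} √(a_{i,n}) for n = 1, …, m−1 and θ̂_m = √(â_{1,m}) + Σ_{i=2}^m θ̂_{i−1} √(ā_{i,m}). Let Ū_m(x, b) = W_m x + λ_m b. Then the network N̂ = R_m ∘ Ū_m ∘ Q_{m−1}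 ∘ U_{m−1} ∘ ⋯ ∘ Q_1 ∘ Û₁ : H → H is Lipschitz with constant θ̂_m / 2^{m−1}. -/
/-!
Write `V n` for the difference of the two inputs of the `n`-th activation `Q n` and `D n` for the
difference of its outputs. Firm nonexpansiveness of `Q n` means that `2 • D n = V n + e n` with
`‖e n‖ ≤ ‖V n‖` (`norm_two_smul_Qop_le`). Unrolling `V (n + 1) = U (n + 1) (D n)` gives
`2 ^ (n - 1) • V n = Uₙ ⋯ U₂ (V 1) + ∑ i ∈ [2, n], 2 ^ (i - 2) • Uₙ ⋯ Uᵢ (e (i - 1))`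
(`two_pow_smul_eq`), and the triangle inequality turns this into the recursion for `θh`
(`two_pow_mul_norm_le`), provided `√aᵢₙ` bounds `Uₙ ⋯ Uᵢ`, and the two hatted/barred constants bound
`Uₙ ⋯ U₂ Û₁` and the first component of `Uₘ ⋯ Uᵢ`.

In the basis `v` the operator `Uₙ ⋯ Uᵢ` acts on the `p`-th pair of coordinates by the matrix with
rows `(β, β̃)` and `(0, η)` (`coord_opComp`). Parseval's identity reduces each operator bound to one
on these `2 × 2` matrices; `a` is the supremum of the squares of their largest singular values
(`two_by_two_le`).
The suprema are finite because `|β n p| = ‖W n (v p)‖ ≤ ‖W n‖`.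
-/

noncomputable section

open Finset

variable {H : Type*} [NormedAddCommGroup H] [InnerProductSpace ℝ H]

/-! ### Coordinates in the Hilbert basis -/

theorem hasSum_coord_sq (v : HilbertBasis ℕ ℝ H) (x : H) :
    HasSum (fun p => inner ℝ (v p) x ^ 2) (‖x‖ ^ 2) := by
  have h := v.hasSum_inner_mul_inner x x
  rw [real_inner_self_eq_norm_sq] at h
  refine h.congr_fun ?_
  intro p
  rw [real_inner_comm x (v p)]
  ring

theorem coord_diag (v : HilbertBasis ℕ ℝ H) (A : H →L[ℝ] H) (c : ℕ → ℝ)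
    (hA : ∀ p, A (v p) = c p • v p) (x : H) (p : ℕ) :
    inner ℝ (v p) (A x) = c p * inner ℝ (v p) x := by
  have h := ((v.hasSum_repr x).mapL A).mapL (innerSL ℝ (v p))
  have h2 : HasSum (fun q => innerSL ℝ (v p) (A (v.repr x q • v q))) (c p * inner ℝ (v p) x) := by
    have h3 := hasSum_single (f := fun q => innerSL ℝ (v p) (A (v.repr x q • v q))) p (by
      intro q hq
      simp [hA, v.orthonormal.2 hq.symm])
    convert h3 using 1
    simp [hA, v.orthonormal.1 p, v.repr_apply_apply]
    ring
  exact h.unique h2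

theorem abs_eigenvalue_le (v : HilbertBasis ℕ ℝ H) (A : H →L[ℝ] H) (c : ℕ → ℝ)
    (hA : ∀ p, A (v p) = c p • v p) (p : ℕ) : |c p| ≤ ‖A‖ := by
  have h := A.le_opNorm (v p)
  rwa [hA, norm_smul, v.orthonormal.1 p, mul_one, mul_one, Real.norm_eq_abs] at h

theorem coord_Uop_fst (v : HilbertBasis ℕ ℝ H) (W : ℕ → H →L[ℝ] H) (beta : ℕ → ℕ → ℝ)
    (lam eta : ℕ → ℝ) (n : ℕ) (hW : ∀ p : ℕ, W n (v p) = beta n p • v p)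
    (z : WithLp 2 (H × H)) (p : ℕ) :
    inner ℝ (v p) (Uop W lam eta n z).fst
      = beta n p * inner ℝ (v p) z.fst + lam n * inner ℝ (v p) z.snd := by
  have h : (Uop W lam eta n z).fst = W n z.fst + lam n • z.snd := rfl
  rw [h, inner_add_right, inner_smul_right, coord_diag v (W n) (beta n) hW]

theorem coord_Uop_snd (v : HilbertBasis ℕ ℝ H) (W : ℕ → H →L[ℝ] H)
    (lam eta : ℕ → ℝ) (n : ℕ) (z : WithLp 2 (H × H)) (p : ℕ) :
    inner ℝ (v p) (Uop W lam eta n z).snd = eta n * inner ℝ (v p) z.snd := by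
  have h : (Uop W lam eta n z).snd = eta n • z.snd := rfl
  rw [h, inner_smul_right]

theorem opComp_of_lt {E : Type*} [NormedAddCommGroup E] [NormedSpace ℝ E]
    (A : ℕ → E →L[ℝ] E) {i n : ℕ} (h : n < i) : opComp A i n = 1 := by
  cases n with
  | zero => rfl
  | succ n => simp [opComp, h]

theorem opComp_succ {E : Type*} [NormedAddCommGroup E] [NormedSpace ℝ E]
    (A : ℕ → E →L[ℝ] E) {i n : ℕ} (h : i ≤ n + 1) (z : E) :
    opComp A i (n + 1) z = A (n + 1) (opComp A i n z) := by
  simp [opComp, not_lt.mpr h]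

theorem etaP_succ (eta : ℕ → ℝ) {i n : ℕ} (h : i ≤ n + 1) :
    etaP eta i (n + 1) = eta (n + 1) * etaP eta i n := by
  rw [etaP, Finset.prod_Icc_succ_top h, mul_comm]
  rfl

theorem betaC_succ (beta : ℕ → ℕ → ℝ) {i n : ℕ} (h : i ≤ n + 1) (p : ℕ) :
    betaC beta i (n + 1) p = beta (n + 1) p * betaC beta i n p := by
  rw [betaC, Finset.prod_Icc_succ_top h, mul_comm]
  rfl

theorem betaT_succ (beta : ℕ → ℕ → ℝ) (lam eta : ℕ → ℝ) {i n : ℕ} (hi : 1 ≤ i) (h : i ≤ n)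
    (p : ℕ) :
    betaT beta lam eta i (n + 1) p
      = beta (n + 1) p * betaT beta lam eta i n p + lam (n + 1) * etaP eta i n := by
  obtain ⟨k, rfl⟩ : ∃ k, n = k + 1 := ⟨n - 1, by omega⟩
  simp only [betaT, Nat.add_sub_cancel]
  rw [Finset.sum_Icc_succ_top h, mul_add, Finset.mul_sum]
  have h1 : ∀ j ∈ Finset.Icc i k,
      (∏ l ∈ Finset.Icc (j + 1) (k + 1 + 1), beta l p) * lam j * etaP eta i (j - 1)
        = beta (k + 1 + 1) p
          * ((∏ l ∈ Finset.Icc (j + 1) (k + 1), beta l p) * lam j * etaP eta i (j - 1)) := by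
    intro j hj
    rw [Finset.mem_Icc] at hj
    rw [Finset.prod_Icc_succ_top (by omega)]
    ring
  rw [Finset.sum_congr rfl h1]
  simp only [Finset.Icc_self, Finset.prod_singleton, Nat.add_sub_cancel]
  ring

theorem betaT_self (beta : ℕ → ℕ → ℝ) (lam eta : ℕ → ℝ) {i : ℕ} (hi : 1 ≤ i) (p : ℕ) :
    betaT beta lam eta i i p = lam i := by
  simp [betaT, etaP, Finset.Icc_eq_empty (show ¬ i ≤ i - 1 by omega)]

/-- On the `p`-th pair of coordinates, `Uₙ ⋯ Uᵢ` is the matrix with rows `(β, β̃)` and `(0, η)`. -/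
theorem coord_opComp (v : HilbertBasis ℕ ℝ H) (W : ℕ → H →L[ℝ] H) (beta : ℕ → ℕ → ℝ)
    (lam eta : ℕ → ℝ) (m : ℕ)
    (hW : ∀ n, 1 ≤ n → n ≤ m → ∀ p : ℕ, W n (v p) = beta n p • v p)
    (i : ℕ) (hi : 1 ≤ i) (z : WithLp 2 (H × H)) (p : ℕ) (n : ℕ) (hin : i ≤ n) (hn : n ≤ m) :
    inner ℝ (v p) (opComp (Uop W lam eta) i n z).fst
        = betaC beta i n p * inner ℝ (v p) z.fst
          + betaT beta lam eta i n p * inner ℝ (v p) z.snd ∧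
      inner ℝ (v p) (opComp (Uop W lam eta) i n z).snd = etaP eta i n * inner ℝ (v p) z.snd := by
  induction n, hin using Nat.le_induction with
  | base =>
    obtain ⟨k, rfl⟩ : ∃ k, i = k + 1 := ⟨i - 1, by omega⟩
    rw [opComp_succ _ le_rfl, opComp_of_lt _ (Nat.lt_succ_self k), betaT_self _ _ _ hi,
      one_apply_eq_self, coord_Uop_fst v W beta lam eta _ (hW _ hi hn), coord_Uop_snd]
    simp [betaC, etaP]
  | succ n hin ih =>
    obtain ⟨h1, h2⟩ := ih (by omega)
    rw [opComp_succ _ (by omega), coord_Uop_fst v W beta lam eta _ (hW _ (by omega) hn),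
      coord_Uop_snd, h1, h2, betaC_succ _ (by omega), betaT_succ _ _ _ hi hin,
      etaP_succ _ (by omega)]
    constructor <;> ring

theorem coord_opComp_Uhat (v : HilbertBasis ℕ ℝ H) (W : ℕ → H →L[ℝ] H) (beta : ℕ → ℕ → ℝ)
    (lam eta : ℕ → ℝ) (m : ℕ)
    (hW : ∀ n, 1 ≤ n → n ≤ m → ∀ p : ℕ, W n (v p) = beta n p • v p)
    (b : H) (p : ℕ) (n : ℕ) (h1n : 1 ≤ n) (hn : n ≤ m) :
    inner ℝ (v p) (opComp (Uop W lam eta) 2 n (Uhat1a lam eta b)).fst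
        = betaT beta lam eta 1 n p * inner ℝ (v p) b ∧
      inner ℝ (v p) (opComp (Uop W lam eta) 2 n (Uhat1a lam eta b)).snd
        = etaP eta 1 n * inner ℝ (v p) b := by
  induction n, h1n using Nat.le_induction with
  | base =>
    have h1 : (Uhat1a lam eta b).fst = lam 1 • b := rfl
    have h2 : (Uhat1a lam eta b).snd = eta 1 • b := rfl
    rw [opComp_of_lt _ (by norm_num), betaT_self _ _ _ le_rfl, one_apply_eq_self,
      h1, h2, inner_smul_right, inner_smul_right]
    simp [etaP]
  | succ n hin ih =>
    obtain ⟨h1, h2⟩ := ih (by omega)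
    rw [opComp_succ _ (by omega), coord_Uop_fst v W beta lam eta _ (hW _ (by omega) hn),
      coord_Uop_snd, h1, h2, betaT_succ _ _ _ le_rfl hin, etaP_succ _ (by omega)]
    constructor <;> ring

/-! ### Finiteness of the suprema -/

theorem exists_abs_betaC_le (beta : ℕ → ℕ → ℝ) (B : ℕ → ℝ) (m : ℕ)
    (hB : ∀ n, 1 ≤ n → n ≤ m → ∀ p, |beta n p| ≤ B n) (i n : ℕ) (hi : 1 ≤ i) (hn : n ≤ m) :
    ∃ C, ∀ p, |betaC beta i n p| ≤ C := by
  refine ⟨∏ j ∈ Finset.Icc i n, B j, fun p => ?_⟩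
  rw [betaC, Finset.abs_prod]
  refine Finset.prod_le_prod (fun _ _ => abs_nonneg _) fun j hj => ?_
  rw [Finset.mem_Icc] at hj
  exact hB j (by omega) (by omega) p

theorem exists_abs_betaT_le (beta : ℕ → ℕ → ℝ) (lam eta : ℕ → ℝ) (B : ℕ → ℝ) (m : ℕ)
    (hB : ∀ n, 1 ≤ n → n ≤ m → ∀ p, |beta n p| ≤ B n) (i n : ℕ) (hi : 1 ≤ i) (hin : i ≤ n)
    (hn : n ≤ m) : ∃ C, ∀ p, |betaT beta lam eta i n p| ≤ C := by
  induction n, hin using Nat.le_induction with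
  | base => exact ⟨|lam i|, fun p => by rw [betaT_self _ _ _ hi]⟩
  | succ n hin ih =>
    obtain ⟨C, hC⟩ := ih (by omega)
    refine ⟨B (n + 1) * C + |lam (n + 1) * etaP eta i n|, fun p => ?_⟩
    rw [betaT_succ _ _ _ hi hin]
    refine (abs_add_le _ _).trans ?_
    rw [abs_mul (beta (n + 1) p)]
    have h1 := hB (n + 1) (by omega) hn p
    have h2 := hC p
    have h3 := abs_nonneg (beta (n + 1) p)
    gcongr
    exact h3.trans h1

/-- A common bound for `β²` and `β̃²`, uniform in `p`. -/
theorem exists_sq_le (v : HilbertBasis ℕ ℝ H) (W : ℕ → H →L[ℝ] H) (beta : ℕ → ℕ → ℝ)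
    (lam eta : ℕ → ℝ) (m : ℕ)
    (hW : ∀ n, 1 ≤ n → n ≤ m → ∀ p : ℕ, W n (v p) = beta n p • v p)
    (i n : ℕ) (hi : 1 ≤ i) (hin : i ≤ n) (hn : n ≤ m) :
    ∃ C, ∀ p, betaC beta i n p ^ 2 ≤ C ∧ betaT beta lam eta i n p ^ 2 ≤ C := by
  have hB : ∀ n, 1 ≤ n → n ≤ m → ∀ p, |beta n p| ≤ ‖W n‖ := fun n h1 h2 p =>
    abs_eigenvalue_le v (W n) (beta n) (hW n h1 h2) p
  obtain ⟨C, hC⟩ := exists_abs_betaC_le beta _ m hB i n hi hn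
  obtain ⟨D, hD⟩ := exists_abs_betaT_le beta lam eta _ m hB i n hi hin hn
  refine ⟨C ^ 2 + D ^ 2, fun p => ⟨?_, ?_⟩⟩
  · nlinarith [sq_le_sq.mpr ((hC p).trans (le_abs_self C)), sq_nonneg D]
  · nlinarith [sq_le_sq.mpr ((hD p).trans (le_abs_self D)), sq_nonneg C]

/-! ### Operator bounds -/

/-- The larger root of `μ² - (β² + β̃² + η²) μ + β² η²` bounds the square of the norm of the matrix
with rows `(β, β̃)` and `(0, η)`. -/
theorem two_by_two_le (β t η x b : ℝ) :
    (β * x + t * b) ^ 2 + (η * b) ^ 2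
      ≤ (1 / 2) * (β ^ 2 + t ^ 2 + η ^ 2
          + Real.sqrt ((β ^ 2 + t ^ 2 + η ^ 2) ^ 2 - 4 * β ^ 2 * η ^ 2)) * (x ^ 2 + b ^ 2) := by
  have hdisc : 0 ≤ (β ^ 2 + t ^ 2 + η ^ 2) ^ 2 - 4 * β ^ 2 * η ^ 2 := by
    have : (β ^ 2 + t ^ 2 + η ^ 2) ^ 2 - 4 * β ^ 2 * η ^ 2
        = (β ^ 2 - η ^ 2) ^ 2 + t ^ 2 * (2 * β ^ 2 + 2 * η ^ 2 + t ^ 2) := by ring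
    rw [this]
    positivity
  set r := Real.sqrt ((β ^ 2 + t ^ 2 + η ^ 2) ^ 2 - 4 * β ^ 2 * η ^ 2) with hr
  have hr0 : 0 ≤ r := Real.sqrt_nonneg _
  have hr2 : r ^ 2 = (β ^ 2 + t ^ 2 + η ^ 2) ^ 2 - 4 * β ^ 2 * η ^ 2 := Real.sq_sqrt hdisc
  -- `P` and `S` are the diagonal entries of `μ - AᵀA`, whose determinant vanishes.
  obtain ⟨P, hP⟩ : ∃ P, P = (1 / 2) * (β ^ 2 + t ^ 2 + η ^ 2 + r) - β ^ 2 := ⟨_, rfl⟩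
  obtain ⟨S, hS⟩ : ∃ S, S = (1 / 2) * (β ^ 2 + t ^ 2 + η ^ 2 + r) - t ^ 2 - η ^ 2 := ⟨_, rfl⟩
  have hPS : P * S = (β * t) ^ 2 := by
    rw [hP, hS]
    linear_combination (1 / 4) * hr2
  have hsum : P + S = r := by
    rw [hP, hS]
    ring
  have hP0 : 0 ≤ P := by
    by_contra hneg
    nlinarith [sq_nonneg (β * t)]
  have hS0 : 0 ≤ S := by
    by_contra hneg
    nlinarith [sq_nonneg (β * t)]
  have key : 0 ≤ P * x ^ 2 - 2 * (β * t) * x * b + S * b ^ 2 := by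
    rcases hP0.eq_or_lt with h0 | hpos
    · have hbt : β * t = 0 := by
        rw [← h0, zero_mul] at hPS
        exact pow_eq_zero_iff (two_ne_zero) |>.mp hPS.symm
      rw [hbt]
      nlinarith [mul_nonneg hS0 (sq_nonneg b), mul_nonneg hP0 (sq_nonneg x)]
    · have : 0 ≤ P * (P * x ^ 2 - 2 * (β * t) * x * b + S * b ^ 2) := by
        have : P * (P * x ^ 2 - 2 * (β * t) * x * b + S * b ^ 2) = (P * x - β * t * b) ^ 2 := by
          linear_combination b ^ 2 * hPS
        rw [this]
        positivity
      exact nonneg_of_mul_nonneg_right this hpos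
  rw [hP, hS] at key
  nlinarith [key]

/-- Parseval: a coordinatewise quadratic bound passes to the norms. -/
theorem norm_sq_le_of_coord (v : HilbertBasis ℕ ℝ H) (x b y c : H) (a : ℝ)
    (h : ∀ p, inner ℝ (v p) y ^ 2 + inner ℝ (v p) c ^ 2
      ≤ a * (inner ℝ (v p) x ^ 2 + inner ℝ (v p) b ^ 2)) :
    ‖y‖ ^ 2 + ‖c‖ ^ 2 ≤ a * (‖x‖ ^ 2 + ‖b‖ ^ 2) :=
  hasSum_le h ((hasSum_coord_sq v y).add (hasSum_coord_sq v c))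
    (((hasSum_coord_sq v x).add (hasSum_coord_sq v b)).mul_left a)

theorem le_sqrt_mul_of_sq_le {s a t : ℝ} (ht : 0 ≤ t) (h : s ^ 2 ≤ a * t ^ 2) :
    s ≤ Real.sqrt a * t := by
  refine (Real.le_sqrt_of_sq_le h).trans ?_
  rw [Real.sqrt_mul' _ (sq_nonneg t), Real.sqrt_sq ht]

theorem norm_opComp_le (v : HilbertBasis ℕ ℝ H) (W : ℕ → H →L[ℝ] H) (beta : ℕ → ℕ → ℝ)
    (lam eta : ℕ → ℝ) (m : ℕ)
    (hW : ∀ n, 1 ≤ n → n ≤ m → ∀ p : ℕ, W n (v p) = beta n p • v p)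
    (i n : ℕ) (hi : 1 ≤ i) (hin : i ≤ n) (hn : n ≤ m) (z : WithLp 2 (H × H)) :
    ‖opComp (Uop W lam eta) i n z‖ ≤ Real.sqrt (aC beta lam eta i n) * ‖z‖ := by
  apply le_sqrt_mul_of_sq_le (norm_nonneg _)
  rw [WithLp.prod_norm_sq_eq_of_L2, WithLp.prod_norm_sq_eq_of_L2]
  apply norm_sq_le_of_coord v
  intro p
  obtain ⟨h1, h2⟩ := coord_opComp v W beta lam eta m hW i hi z p n hin hn
  rw [h1, h2]
  refine (two_by_two_le _ _ _ _ _).trans ?_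
  refine mul_le_mul_of_nonneg_right ?_ (by positivity)
  rw [aC]
  refine mul_le_mul_of_nonneg_left ?_ (by norm_num)
  refine le_ciSup (f := fun p : ℕ => betaC beta i n p ^ 2 + betaT beta lam eta i n p ^ 2
    + etaP eta i n ^ 2
    + Real.sqrt ((betaC beta i n p ^ 2 + betaT beta lam eta i n p ^ 2 + etaP eta i n ^ 2) ^ 2
          - 4 * betaC beta i n p ^ 2 * etaP eta i n ^ 2)) ?_ p
  obtain ⟨C, hC⟩ := exists_sq_le v W beta lam eta m hW i n hi hin hn
  refine ⟨2 * (C + C + etaP eta i n ^ 2), ?_⟩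
  rintro _ ⟨q, rfl⟩
  obtain ⟨hC1, hC2⟩ := hC q
  have hs : Real.sqrt ((betaC beta i n q ^ 2 + betaT beta lam eta i n q ^ 2
      + etaP eta i n ^ 2) ^ 2 - 4 * betaC beta i n q ^ 2 * etaP eta i n ^ 2)
      ≤ betaC beta i n q ^ 2 + betaT beta lam eta i n q ^ 2 + etaP eta i n ^ 2 := by
    refine Real.sqrt_le_iff.mpr ⟨by positivity, ?_⟩
    have : 0 ≤ 4 * betaC beta i n q ^ 2 * etaP eta i n ^ 2 := by positivity
    linarith
  dsimp only
  linarith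

theorem norm_fst_opComp_le (v : HilbertBasis ℕ ℝ H) (W : ℕ → H →L[ℝ] H) (beta : ℕ → ℕ → ℝ)
    (lam eta : ℕ → ℝ) (m : ℕ)
    (hW : ∀ n, 1 ≤ n → n ≤ m → ∀ p : ℕ, W n (v p) = beta n p • v p)
    (i n : ℕ) (hi : 1 ≤ i) (hin : i ≤ n) (hn : n ≤ m) (z : WithLp 2 (H × H)) :
    ‖(opComp (Uop W lam eta) i n z).fst‖ ≤ Real.sqrt (aBar beta lam eta i n) * ‖z‖ := by
  apply le_sqrt_mul_of_sq_le (norm_nonneg _)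
  rw [WithLp.prod_norm_sq_eq_of_L2]
  have h0 : ‖(opComp (Uop W lam eta) i n z).fst‖ ^ 2
      = ‖(opComp (Uop W lam eta) i n z).fst‖ ^ 2 + ‖(0 : H)‖ ^ 2 := by simp
  rw [h0]
  apply norm_sq_le_of_coord v
  intro p
  rw [(coord_opComp v W beta lam eta m hW i hi z p n hin hn).1]
  have hcs : (betaC beta i n p * inner ℝ (v p) z.fst
        + betaT beta lam eta i n p * inner ℝ (v p) z.snd) ^ 2 + inner ℝ (v p) (0 : H) ^ 2
      ≤ (betaC beta i n p ^ 2 + betaT beta lam eta i n p ^ 2)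
        * (inner ℝ (v p) z.fst ^ 2 + inner ℝ (v p) z.snd ^ 2) := by
    rw [inner_zero_right]
    nlinarith [sq_nonneg (betaC beta i n p * inner ℝ (v p) z.snd
      - betaT beta lam eta i n p * inner ℝ (v p) z.fst)]
  refine hcs.trans (mul_le_mul_of_nonneg_right ?_ (by positivity))
  obtain ⟨C, hC⟩ := exists_sq_le v W beta lam eta m hW i n hi hin hn
  refine le_ciSup (f := fun p : ℕ => betaC beta i n p ^ 2 + betaT beta lam eta i n p ^ 2) ?_ p
  refine ⟨C + C, ?_⟩
  rintro _ ⟨q, rfl⟩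
  exact add_le_add (hC q).1 (hC q).2

theorem norm_opComp_Uhat_le (v : HilbertBasis ℕ ℝ H) (W : ℕ → H →L[ℝ] H) (beta : ℕ → ℕ → ℝ)
    (lam eta : ℕ → ℝ) (m : ℕ)
    (hW : ∀ n, 1 ≤ n → n ≤ m → ∀ p : ℕ, W n (v p) = beta n p • v p)
    (n : ℕ) (h1n : 1 ≤ n) (hn : n ≤ m) (b : H) :
    ‖opComp (Uop W lam eta) 2 n (Uhat1a lam eta b)‖
      ≤ Real.sqrt (⨆ p : ℕ, (betaT beta lam eta 1 n p ^ 2 + etaP eta 1 n ^ 2)) * ‖b‖ := by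
  apply le_sqrt_mul_of_sq_le (norm_nonneg _)
  rw [WithLp.prod_norm_sq_eq_of_L2]
  have h0 : ‖b‖ ^ 2 = ‖b‖ ^ 2 + ‖(0 : H)‖ ^ 2 := by simp
  rw [h0]
  apply norm_sq_le_of_coord v
  intro p
  obtain ⟨h1, h2⟩ := coord_opComp_Uhat v W beta lam eta m hW b p n h1n hn
  obtain ⟨C, hC⟩ := exists_sq_le v W beta lam eta m hW 1 n le_rfl h1n hn
  have hsup := le_ciSup (f := fun p : ℕ => betaT beta lam eta 1 n p ^ 2 + etaP eta 1 n ^ 2)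
    ⟨C + etaP eta 1 n ^ 2, by
      rintro _ ⟨q, rfl⟩
      exact add_le_add (hC q).2 le_rfl⟩ p
  rw [h1, h2, inner_zero_right]
  have := mul_le_mul_of_nonneg_right hsup (sq_nonneg (inner ℝ (v p) b))
  linarith

theorem norm_fst_opComp_Uhat_le (v : HilbertBasis ℕ ℝ H) (W : ℕ → H →L[ℝ] H)
    (beta : ℕ → ℕ → ℝ) (lam eta : ℕ → ℝ) (m : ℕ)
    (hW : ∀ n, 1 ≤ n → n ≤ m → ∀ p : ℕ, W n (v p) = beta n p • v p)
    (n : ℕ) (h1n : 1 ≤ n) (hn : n ≤ m) (b : H) :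
    ‖(opComp (Uop W lam eta) 2 n (Uhat1a lam eta b)).fst‖
      ≤ Real.sqrt (⨆ p : ℕ, betaT beta lam eta 1 n p ^ 2) * ‖b‖ := by
  apply le_sqrt_mul_of_sq_le (norm_nonneg _)
  refine hasSum_le (fun p => ?_) (hasSum_coord_sq v _) ((hasSum_coord_sq v b).mul_left _)
  obtain ⟨C, hC⟩ := exists_sq_le v W beta lam eta m hW 1 n le_rfl h1n hn
  have hsup := le_ciSup (f := fun p : ℕ => betaT beta lam eta 1 n p ^ 2)
    ⟨C, by
      rintro _ ⟨q, rfl⟩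
      exact (hC q).2⟩ p
  rw [(coord_opComp_Uhat v W beta lam eta m hW b p n h1n hn).1, mul_pow]
  exact mul_le_mul_of_nonneg_right hsup (sq_nonneg _)

/-! ### Unrolling the layers -/

/-- The reflection `2 R - Id` of a firmly nonexpansive map is nonexpansive; here `r` and `d` are
differences of values and of arguments. -/
theorem norm_sq_reflect_le (r d : H) (h : ‖r‖ ^ 2 + ‖d - r‖ ^ 2 ≤ ‖d‖ ^ 2) :
    ‖(2 : ℝ) • r - d‖ ^ 2 ≤ ‖d‖ ^ 2 := by
  have hp := parallelogram_law_with_norm ℝ r (d - r)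
  have e1 : r + (d - r) = d := by abel
  have e2 : r - (d - r) = (2 : ℝ) • r - d := by rw [two_smul]; abel
  rw [e1, e2] at hp
  nlinarith

theorem norm_two_smul_Qop_le (R : ℕ → H → H) (n : ℕ)
    (hR : ∀ x y : H,
      ‖R n x - R n y‖ ^ 2 + ‖(x - R n x) - (y - R n y)‖ ^ 2 ≤ ‖x - y‖ ^ 2)
    (z w : WithLp 2 (H × H)) :
    ‖(2 : ℝ) • (Qop R n z - Qop R n w) - (z - w)‖ ≤ ‖z - w‖ := by
  refine le_of_sq_le_sq ?_ (norm_nonneg _)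
  rw [WithLp.prod_norm_sq_eq_of_L2, WithLp.prod_norm_sq_eq_of_L2]
  have e1 : ((2 : ℝ) • (Qop R n z - Qop R n w) - (z - w)).fst
      = (2 : ℝ) • (R n z.fst - R n w.fst) - (z.fst - w.fst) := rfl
  have e2 : ((2 : ℝ) • (Qop R n z - Qop R n w) - (z - w)).snd
      = (2 : ℝ) • (z.snd - w.snd) - (z.snd - w.snd) := rfl
  have e3 : (z - w).fst = z.fst - w.fst := rfl
  have e4 : (z - w).snd = z.snd - w.snd := rfl
  have e5 : (2 : ℝ) • (z.snd - w.snd) - (z.snd - w.snd) = z.snd - w.snd := by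
    rw [two_smul]; abel
  rw [e1, e2, e3, e4, e5]
  have h := norm_sq_reflect_le (R n z.fst - R n w.fst) (z.fst - w.fst) (by
    have := hR z.fst w.fst
    rwa [sub_sub_sub_comm] at this)
  linarith

theorem two_pow_smul_eq {E : Type*} [NormedAddCommGroup E] [NormedSpace ℝ E]
    (U : ℕ → E →L[ℝ] E) (V D e : ℕ → E)
    (hVD : ∀ n, 1 ≤ n → V (n + 1) = U (n + 1) (D n))
    (hD : ∀ n, (2 : ℝ) • D n = V n + e n) (n : ℕ) (hn : 1 ≤ n) :
    (2 : ℝ) ^ (n - 1) • V n = opComp U 2 n (V 1)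
      + ∑ i ∈ Finset.Icc 2 n, (2 : ℝ) ^ (i - 2) • opComp U i n (e (i - 1)) := by
  induction n, hn using Nat.le_induction with
  | base => simp [opComp_of_lt]
  | succ n hn ih =>
    rw [Finset.sum_Icc_succ_top (by omega), opComp_succ _ (by omega),
      opComp_succ _ le_rfl, opComp_of_lt _ (Nat.lt_succ_self n), one_apply_eq_self]
    have hs : ∀ i ∈ Finset.Icc 2 n,
        (2 : ℝ) ^ (i - 2) • opComp U i (n + 1) (e (i - 1))
          = U (n + 1) ((2 : ℝ) ^ (i - 2) • opComp U i n (e (i - 1))) := by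
      intro i hi
      rw [Finset.mem_Icc] at hi
      rw [opComp_succ _ (by omega), map_smul]
    rw [Finset.sum_congr rfl hs, ← map_sum, ← map_smul (U (n + 1)), ← add_assoc, ← map_add,
      ← map_add, ← ih, hVD n hn, ← map_smul]
    have h2 : n + 1 - 2 = n - 1 := by omega
    have h3 : n + 1 - 1 = (n - 1) + 1 := by omega
    rw [h2, h3, pow_succ, mul_smul, hD, smul_add]
    congr 4

/-- One step of the recursion for `θ`. The map `L` is the identity for the inner layers and the
first projection for the last one. -/
theorem two_pow_mul_norm_le {E F : Type*} [NormedAddCommGroup E] [NormedSpace ℝ E]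
    [NormedAddCommGroup F] [NormedSpace ℝ F]
    (U : ℕ → E →L[ℝ] E) (V D e : ℕ → E)
    (hVD : ∀ n, 1 ≤ n → V (n + 1) = U (n + 1) (D n))
    (hD : ∀ n, (2 : ℝ) • D n = V n + e n)
    (n : ℕ) (hn : 1 ≤ n) (he : ∀ k, 1 ≤ k → k < n → ‖e k‖ ≤ ‖V k‖)
    (L : E →L[ℝ] F) (c₀ : ℝ) (c θ : ℕ → ℝ) (δ : ℝ)
    (hc₀ : ‖L (opComp U 2 n (V 1))‖ ≤ c₀ * δ) (hc : ∀ i, 0 ≤ c i)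
    (hL : ∀ i, 2 ≤ i → i ≤ n → ∀ z, ‖L (opComp U i n z)‖ ≤ c i * ‖z‖)
    (hθ : ∀ k, 1 ≤ k → k < n → (2 : ℝ) ^ (k - 1) * ‖V k‖ ≤ θ k * δ) :
    (2 : ℝ) ^ (n - 1) * ‖L (V n)‖ ≤ (c₀ + ∑ i ∈ Finset.Icc 2 n, θ (i - 1) * c i) * δ := by
  have h2 : ∀ k : ℕ, ‖(2 : ℝ) ^ k‖ = 2 ^ k := fun k => by simp
  calc (2 : ℝ) ^ (n - 1) * ‖L (V n)‖ = ‖L ((2 : ℝ) ^ (n - 1) • V n)‖ := by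
        rw [map_smul, norm_smul, h2]
    _ ≤ ‖L (opComp U 2 n (V 1))‖
        + ∑ i ∈ Finset.Icc 2 n, ‖L ((2 : ℝ) ^ (i - 2) • opComp U i n (e (i - 1)))‖ := by
        rw [two_pow_smul_eq U V D e hVD hD n hn, map_add, map_sum]
        exact (norm_add_le _ _).trans (add_le_add le_rfl (norm_sum_le _ _))
    _ ≤ c₀ * δ + ∑ i ∈ Finset.Icc 2 n, θ (i - 1) * c i * δ := by
        refine add_le_add hc₀ (Finset.sum_le_sum fun i hi => ?_)
        rw [Finset.mem_Icc] at hi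
        rw [map_smul, norm_smul, h2]
        have ha := hL i hi.1 hi.2 (e (i - 1))
        have hb := he (i - 1) (by omega) (by omega)
        have hd := hθ (i - 1) (by omega) (by omega)
        rw [show i - 1 - 1 = i - 2 by omega] at hd
        calc (2 : ℝ) ^ (i - 2) * ‖L (opComp U i n (e (i - 1)))‖
            ≤ 2 ^ (i - 2) * (c i * ‖V (i - 1)‖) := by
              gcongr
              exact ha.trans (mul_le_mul_of_nonneg_left hb (hc i))
          _ = c i * (2 ^ (i - 2) * ‖V (i - 1)‖) := by ring
          _ ≤ c i * (θ (i - 1) * δ) := mul_le_mul_of_nonneg_left hd (hc i)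
          _ = θ (i - 1) * c i * δ := by ring
    _ = (c₀ + ∑ i ∈ Finset.Icc 2 n, θ (i - 1) * c i) * δ := by
        rw [add_mul, Finset.sum_mul]

/-- The input of the `n`-th activation in `midNet`; the value at `n = 0` is irrelevant. -/
def preAct (U : ℕ → WithLp 2 (H × H) →L[ℝ] WithLp 2 (H × H))
    (Q : ℕ → WithLp 2 (H × H) → WithLp 2 (H × H)) (U1 : H → WithLp 2 (H × H)) :
    ℕ → (H → WithLp 2 (H × H))
  | 0 => fun _ => 0
  | 1 => U1
  | n + 2 => fun b => U (n + 2) (midNet U Q U1 (n + 1) b)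

theorem midNet_eq (U : ℕ → WithLp 2 (H × H) →L[ℝ] WithLp 2 (H × H))
    (Q : ℕ → WithLp 2 (H × H) → WithLp 2 (H × H)) (U1 : H → WithLp 2 (H × H))
    (n : ℕ) (hn : 1 ≤ n) (b : H) : midNet U Q U1 n b = Q n (preAct U Q U1 n b) := by
  match n, hn with
  | 1, _ => rfl
  | n + 2, _ => rfl

theorem preAct_succ (U : ℕ → WithLp 2 (H × H) →L[ℝ] WithLp 2 (H × H))
    (Q : ℕ → WithLp 2 (H × H) → WithLp 2 (H × H)) (U1 : H → WithLp 2 (H × H))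
    (n : ℕ) (hn : 1 ≤ n) (b : H) :
    preAct U Q U1 (n + 1) b = U (n + 1) (midNet U Q U1 n b) := by
  match n, hn with
  | n + 1, _ => rfl


theorem statement15 (m : ℕ) (hm : 1 ≤ m) [CompleteSpace H]
    (v : HilbertBasis ℕ ℝ H)
    (W : ℕ → H →L[ℝ] H) (beta : ℕ → ℕ → ℝ) (lam eta : ℕ → ℝ)
    (hW : ∀ n, 1 ≤ n → n ≤ m → ∀ p : ℕ, W n (v p) = beta n p • v p)
    (hlam : ∀ n, 1 ≤ n → n ≤ m → 0 < lam n)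
    (heta : ∀ n, 1 ≤ n → n ≤ m → 0 < eta n)
    (hm2 : 2 ≤ m)
    (R : ℕ → H → H)
    (hR : ∀ n, 1 ≤ n → n ≤ m → ∀ x y : H,
      ‖R n x - R n y‖ ^ 2 + ‖(x - R n x) - (y - R n y)‖ ^ 2 ≤ ‖x - y‖ ^ 2)
    (θh : ℕ → ℝ)
    (hθh : ∀ n, 1 ≤ n → n ≤ m - 1 →
      θh n = Real.sqrt (⨆ p : ℕ, (betaT beta lam eta 1 n p ^ 2 + etaP eta 1 n ^ 2))
        + ∑ i ∈ Finset.Icc 2 n, θh (i - 1) * Real.sqrt (aC beta lam eta i n))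
    (hθhm : θh m = Real.sqrt (⨆ p : ℕ, betaT beta lam eta 1 m p ^ 2)
        + ∑ i ∈ Finset.Icc 2 m, θh (i - 1) * Real.sqrt (aBar beta lam eta i m)) :
    ∀ b b' : H,
      ‖R m (Ubar W lam m (midNet (Uop W lam eta) (Qop R) (⇑(Uhat1a lam eta)) (m - 1) b))
          - R m (Ubar W lam m (midNet (Uop W lam eta) (Qop R) (⇑(Uhat1a lam eta)) (m - 1) b'))‖
        ≤ θh m / 2 ^ (m - 1) * ‖b - b'‖ := by
  intro b b'
  set U := Uop W lam eta with hU
  set M := midNet U (Qop R) (⇑(Uhat1a lam eta)) with hM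
  set P := preAct U (Qop R) (⇑(Uhat1a lam eta)) with hP
  obtain ⟨V, hV⟩ : ∃ V : ℕ → WithLp 2 (H × H), ∀ n, V n = P n b - P n b' := ⟨_, fun _ => rfl⟩
  obtain ⟨D, hDdef⟩ : ∃ D : ℕ → WithLp 2 (H × H), ∀ n, D n = M n b - M n b' :=
    ⟨_, fun _ => rfl⟩
  obtain ⟨e, hedef⟩ : ∃ e : ℕ → WithLp 2 (H × H), ∀ n, e n = (2 : ℝ) • D n - V n :=
    ⟨_, fun _ => rfl⟩
  have hVD : ∀ n, 1 ≤ n → V (n + 1) = U (n + 1) (D n) := fun n hn => by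
    rw [hV, hDdef, map_sub, hP, preAct_succ _ _ _ _ hn, preAct_succ _ _ _ _ hn]
  have hD : ∀ n, (2 : ℝ) • D n = V n + e n := fun n => by
    rw [hedef]; abel
  have he : ∀ n, 1 ≤ n → n ≤ m → ‖e n‖ ≤ ‖V n‖ := fun n hn hnm => by
    rw [hedef, hDdef, hV, hM, midNet_eq _ _ _ _ hn, midNet_eq _ _ _ _ hn]
    exact norm_two_smul_Qop_le R n (hR n hn hnm) _ _
  have hV1 : V 1 = Uhat1a lam eta (b - b') := by
    rw [hV, map_sub]; rfl
  have hinner : ∀ n, 1 ≤ n → n < m → (2 : ℝ) ^ (n - 1) * ‖V n‖ ≤ θh n * ‖b - b'‖ := by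
    intro n
    induction n using Nat.strong_induction_on with
    | _ n ih =>
      intro hn hnm
      rw [hθh n hn (by omega)]
      refine two_pow_mul_norm_le U V D e hVD hD n hn (fun k h1 h2 => he k h1 (by omega))
        (ContinuousLinearMap.id ℝ _) _ (fun i => Real.sqrt (aC beta lam eta i n)) θh _ ?_
        (fun _ => Real.sqrt_nonneg _) ?_ (fun k h1 h2 => ih k h2 h1 (by omega))
      · rw [hV1]
        exact norm_opComp_Uhat_le v W beta lam eta m hW n hn hnm.le _
      · intro i hi hin z
        exact norm_opComp_le v W beta lam eta m hW i n (by omega) hin hnm.le z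
  have hlast : (2 : ℝ) ^ (m - 1) * ‖(V m).fst‖ ≤ θh m * ‖b - b'‖ := by
    rw [hθhm]
    refine two_pow_mul_norm_le U V D e hVD hD m hm (fun k h1 h2 => he k h1 h2.le)
      fstL _ (fun i => Real.sqrt (aBar beta lam eta i m)) θh _ ?_
      (fun _ => Real.sqrt_nonneg _) ?_ hinner
    · rw [hV1]
      exact norm_fst_opComp_Uhat_le v W beta lam eta m hW m hm le_rfl _
    · intro i hi hin z
      exact norm_fst_opComp_le v W beta lam eta m hW i m (by omega) hin le_rfl z
  have hout : Ubar W lam m (M (m - 1) b) - Ubar W lam m (M (m - 1) b') = (V m).fst := by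
    have h := hVD (m - 1) (by omega)
    rw [show m - 1 + 1 = m by omega, hDdef] at h
    rw [← map_sub, h]
    rfl
  have hRm : ‖R m (Ubar W lam m (M (m - 1) b)) - R m (Ubar W lam m (M (m - 1) b'))‖
      ≤ ‖(V m).fst‖ := by
    rw [← hout]
    refine le_of_sq_le_sq ?_ (norm_nonneg _)
    exact (le_add_of_nonneg_right (sq_nonneg _)).trans (hR m hm le_rfl _ _)
  refine hRm.trans ?_
  rw [div_mul_eq_mul_div, le_div_iff₀ (by positivity), mul_comm]
  exact hlast
end
end
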